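/- arXiv:1908.11340 — 4 statements merged into one kernel-verified Lean document; each statement's English description precedes it below -/
import Mathlib

section
/- Let μ be a (positive) measure on ℂ, let l be a natural number, and let f : ℂ → ℂ be measurable with ∫ |f(s)|(1 + |s|^l) dμ(s) < ∞. Let k ∈ ℂ, k ≠ 0, and ε > 0 be such that |s − k| ≥ ε|k| for μ-almost every s. Then | ∫ f(s)/(s − k) dμ(s) + Σ_{i=1}^{l} k^{-i} ∫ f(s) s^{i-1} dμ(s) | ≤ (ε |k|^{l+1})⁻¹ ∫ |f(s)| |s|^l dμ(s). -/
open MeasureTheory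

/-! Truncating the Neumann series of `(s - k)⁻¹` in powers of `s / k` leaves exactly the remainder
`s ^ l / (k ^ l * (s - k))`. Integrated against `f`, this identity turns the truncation error into
the integral of the remainder, where `‖s - k‖` is bounded below by `ε * ‖k‖`. -/

theorem inv_sub_add_sum_inv_pow_mul_pow {K : Type*} [Field K] {s k : K} (hk : k ≠ 0) (hs : s ≠ k)
    (l : ℕ) :
    (s - k)⁻¹ + ∑ i ∈ Finset.Icc 1 l, (k ^ i)⁻¹ * s ^ (i - 1) = s ^ l / (k ^ l * (s - k)) := by
  have hsk : s - k ≠ 0 := sub_ne_zero.mpr hs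
  induction l with
  | zero => simp
  | succ l ih =>
    rw [Finset.sum_Icc_succ_top (Nat.le_add_left 1 l), ← add_assoc, ih, Nat.add_sub_cancel]
    field_simp
    ring

theorem norm_pow_div_pow_mul_sub_le {K : Type*} [NormedField K] {s k : K} {δ : ℝ} (hδ : 0 < δ)
    (hs : δ ≤ ‖s - k‖) (l : ℕ) :
    ‖s ^ l / (k ^ l * (s - k))‖ ≤ (‖k‖ ^ l * δ)⁻¹ * ‖s‖ ^ l := by
  rw [norm_div, norm_mul, norm_pow, norm_pow, div_eq_inv_mul, mul_inv, mul_inv]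
  gcongr

theorem pow_le_one_add_pow {R : Type*} [Semiring R] [LinearOrder R] [IsOrderedRing R] {x : R}
    (hx : 0 ≤ x) {m n : ℕ} (hmn : m ≤ n) : x ^ m ≤ 1 + x ^ n := by
  rcases le_total x 1 with hx1 | hx1
  · exact (pow_le_one₀ hx hx1).trans (le_add_of_nonneg_right (pow_nonneg hx n))
  · exact (pow_le_pow_right₀ hx1 hmn).trans (le_add_of_nonneg_left zero_le_one)

section CauchyTransform

variable {α 𝕜 E : Type*} [MeasurableSpace α] {μ : Measure α} [NormedField 𝕜]
  [NormedAddCommGroup E] [NormedSpace 𝕜 E] {f : α → E} {z : α → 𝕜} {k : 𝕜} {l : ℕ}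

theorem integrable_pow_smul_of_le (hf : AEStronglyMeasurable f μ) (hz : AEStronglyMeasurable z μ)
    (hint : Integrable (fun x => ‖f x‖ * (1 + ‖z x‖ ^ l)) μ) {j : ℕ} (hj : j ≤ l) :
    Integrable (fun x => z x ^ j • f x) μ := by
  refine hint.mono' ((hz.pow j).smul hf) (.of_forall fun x => ?_)
  rw [norm_smul, norm_pow, mul_comm]
  gcongr
  exact pow_le_one_add_pow (norm_nonneg _) hj

theorem integrable_inv_sub_smul (hf : Integrable f μ) (hz : AEStronglyMeasurable z μ) {δ : ℝ}
    (hδ : 0 < δ) (hdist : ∀ᵐ x ∂μ, δ ≤ ‖z x - k‖) :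
    Integrable (fun x => (z x - k)⁻¹ • f x) μ := by
  refine hf.bdd_smul δ⁻¹ (hz.sub aestronglyMeasurable_const).inv₀ ?_
  filter_upwards [hdist] with x hx
  rw [norm_inv]
  exact inv_anti₀ hδ hx

variable [NormedSpace ℝ E] [SMulCommClass ℝ 𝕜 E]

theorem integral_inv_sub_smul_add_sum (hk : k ≠ 0) (hzk : ∀ᵐ x ∂μ, z x ≠ k)
    (hcauchy : Integrable (fun x => (z x - k)⁻¹ • f x) μ)
    (hmoment : ∀ j < l, Integrable (fun x => z x ^ j • f x) μ) :
    (∫ x, (z x - k)⁻¹ • f x ∂μ) +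
        ∑ i ∈ Finset.Icc 1 l, (k ^ i)⁻¹ • ∫ x, z x ^ (i - 1) • f x ∂μ =
      ∫ x, (z x ^ l / (k ^ l * (z x - k))) • f x ∂μ := by
  have hterm : ∀ i ∈ Finset.Icc 1 l,
      Integrable (fun x => (k ^ i)⁻¹ • z x ^ (i - 1) • f x) μ := fun i hi =>
    (hmoment (i - 1) (by grind)).fun_smul _
  simp_rw [← integral_smul]
  rw [← integral_finsetSum _ hterm, ← integral_add hcauchy (integrable_finsetSum _ hterm)]
  refine integral_congr_ae ?_
  filter_upwards [hzk] with x hx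
  simp_rw [← inv_sub_add_sum_inv_pow_mul_pow hk hx l, add_smul, Finset.sum_smul, mul_smul]

theorem cauchy_transform_expansion_general (hf : AEStronglyMeasurable f μ)
    (hz : AEStronglyMeasurable z μ) (hint : Integrable (fun x => ‖f x‖ * (1 + ‖z x‖ ^ l)) μ)
    (hk : k ≠ 0) {ε : ℝ} (hε : 0 < ε) (hdist : ∀ᵐ x ∂μ, ε * ‖k‖ ≤ ‖z x - k‖) :
    ‖(∫ x, (z x - k)⁻¹ • f x ∂μ) +
        ∑ i ∈ Finset.Icc 1 l, (k ^ i)⁻¹ • ∫ x, z x ^ (i - 1) • f x ∂μ‖ ≤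
      (ε * ‖k‖ ^ (l + 1))⁻¹ * ∫ x, ‖f x‖ * ‖z x‖ ^ l ∂μ := by
  have hδ : 0 < ε * ‖k‖ := mul_pos hε (norm_pos_iff.mpr hk)
  have hmoment {j : ℕ} (hj : j ≤ l) : Integrable (fun x => z x ^ j • f x) μ :=
    integrable_pow_smul_of_le hf hz hint hj
  have hf_int : Integrable f μ := by simpa using hmoment l.zero_le
  have hzk : ∀ᵐ x ∂μ, z x ≠ k := hdist.mono fun x hx =>
    sub_ne_zero.mp (norm_pos_iff.mp (hδ.trans_le hx))
  have habs : Integrable (fun x => ‖f x‖ * ‖z x‖ ^ l) μ := by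
    simpa [norm_smul, mul_comm] using (hmoment le_rfl).norm
  rw [integral_inv_sub_smul_add_sum hk hzk (integrable_inv_sub_smul hf_int hz hδ hdist)
    fun j hj => hmoment hj.le, ← integral_const_mul]
  refine norm_integral_le_of_norm_le (habs.const_mul _) ?_
  filter_upwards [hdist] with x hx
  calc ‖(z x ^ l / (k ^ l * (z x - k))) • f x‖
      ≤ (‖k‖ ^ l * (ε * ‖k‖))⁻¹ * ‖z x‖ ^ l * ‖f x‖ := by
        rw [norm_smul]
        gcongr
        exact norm_pow_div_pow_mul_sub_le hδ hx l
    _ = (ε * ‖k‖ ^ (l + 1))⁻¹ * (‖f x‖ * ‖z x‖ ^ l) := by ring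

end CauchyTransform

/-- Expansion of the Cauchy transform at infinity: if `∫ |f(s)|(1 + |s|^l) dμ < ∞` and
`|s - k| ≥ ε|k|` for `μ`-a.e. `s`, then truncating the Neumann series of `1/(s - k)` gives
`| ∫ f(s)/(s-k) dμ + ∑_{i=1}^{l} k⁻ⁱ ∫ f(s) s^{i-1} dμ | ≤ (ε |k|^{l+1})⁻¹ ∫ |f(s)||s|^l dμ`. -/
theorem cauchy_transform_expansion (μ : Measure ℂ) (l : ℕ) (f : ℂ → ℂ)
    (hmeas : Measurable f)
    (hint : Integrable (fun s => ‖f s‖ * (1 + ‖s‖ ^ l)) μ)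
    (k : ℂ) (hk : k ≠ 0) (ε : ℝ) (hε : 0 < ε)
    (hdist : ∀ᵐ s ∂μ, ε * ‖k‖ ≤ ‖s - k‖) :
    ‖(∫ s, f s / (s - k) ∂μ) +
        ∑ i ∈ Finset.Icc 1 l, (k ^ i)⁻¹ * ∫ s, f s * s ^ (i - 1) ∂μ‖ ≤
      (ε * ‖k‖ ^ (l + 1))⁻¹ * ∫ s, ‖f s‖ * ‖s‖ ^ l ∂μ := by
  simpa only [id_eq, smul_eq_mul, div_eq_inv_mul, mul_comm (f _)] using
    cauchy_transform_expansion_general hmeas.aestronglyMeasurable aestronglyMeasurable_id hint hk hε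
      hdist
end

section
/- Let A be a unital (not necessarily commutative) ring and let C₊, C₋ : A → A be additive maps satisfying C₊(a) = C₋(a) + a for all a ∈ A. Let u⁺, u⁻, m, φ ∈ A satisfy the singular integral equation φ = C₊(φu⁻ + m u⁻) + C₋(φu⁺ + m u⁺). Then m + C₊((φ + m)(u⁺ + u⁻)) = (m + φ)(1 + u⁺) and m + C₋((φ + m)(u⁺ + u⁻)) = (m + φ)(1 − u⁻). -/
section Plemelj

variable {M : Type*}

theorem plemelj_plus_map_add [AddMonoid M] (Cp : M →+ M) {Cm : M → M}
    (hPlemelj : ∀ a, Cp a = Cm a + a) (x y : M) :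
    Cp (x + y) = Cp x + Cm y + y := by
  rw [map_add, hPlemelj y, add_assoc]

theorem plemelj_minus_map_add [AddCommGroup M] {Cp : M → M} (Cm : M →+ M)
    (hPlemelj : ∀ a, Cp a = Cm a + a) (x y : M) :
    Cm (x + y) = Cp x + Cm y - x := by
  rw [map_add, hPlemelj x, add_right_comm, add_sub_cancel_right]

/-- `up` and `um` stand for right multiplication by `u⁺` and `u⁻`; as operators on `M` they also
cover row vectors `m`, `φ` with square matrices `u⁺`, `u⁻`. -/
theorem boundary_values_of_sie_general [AddCommGroup M] (Cp Cm : M →+ M)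
    (hPlemelj : ∀ a, Cp a = Cm a + a) (up um : AddMonoid.End M) (m φ : M)
    (hφ : φ = Cp (um φ + um m) + Cm (up φ + up m)) :
    m + Cp ((up + um) (φ + m)) = (1 + up) (m + φ) ∧
      m + Cm ((up + um) (φ + m)) = (1 - um) (m + φ) := by
  have density_split : (up + um) (φ + m) = um (φ + m) + up (φ + m) := add_comm _ _
  have sie : Cp (um (φ + m)) + Cm (up (φ + m)) = φ := by
    rw [map_add um, map_add up, ← hφ]
  rw [density_split]
  constructor
  · calc
      m + Cp (um (φ + m) + up (φ + m)) = m + (φ + up (φ + m)) := by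
        rw [plemelj_plus_map_add Cp hPlemelj, sie]
      _ = m + φ + up (m + φ) := by rw [← add_assoc, add_comm φ m]
      _ = (1 + up) (m + φ) := rfl
  · calc
      m + Cm (um (φ + m) + up (φ + m)) = m + (φ - um (φ + m)) := by
        rw [plemelj_minus_map_add Cm hPlemelj, sie]
      _ = m + φ - um (m + φ) := by rw [← add_sub_assoc, add_comm φ m]
      _ = (1 - um) (m + φ) := rfl

end Plemelj

/-- Plemelj algebra: if `C₊, C₋` are additive maps on a unital ring with `C₊ = C₋ + id`, and
`φ = C₊(φu⁻ + mu⁻) + C₋(φu⁺ + mu⁺)` (the singular integral equation), then the boundary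
values `m + C₊((φ + m)(u⁺ + u⁻))` and `m + C₋((φ + m)(u⁺ + u⁻))` equal
`(m + φ)(1 + u⁺)` and `(m + φ)(1 - u⁻)` respectively. -/
theorem boundary_values_of_sie {A : Type*} [Ring A] (Cp Cm : A →+ A)
    (hPlemelj : ∀ a : A, Cp a = Cm a + a)
    (up um m φ : A)
    (hφ : φ = Cp (φ * um + m * um) + Cm (φ * up + m * up)) :
    m + Cp ((φ + m) * (up + um)) = (m + φ) * (1 + up) ∧
      m + Cm ((φ + m) * (up + um)) = (m + φ) * (1 - um) := by
  rw [mul_add _ up, mul_one_add, mul_one_sub]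
  exact boundary_values_of_sie_general Cp Cm hPlemelj (.mulRight up) (.mulRight um) m φ hφ
end

section
/- Let A be a unital (not necessarily commutative) ring and let C₊, C₋ : A → A be additive maps satisfying C₊(a) = C₋(a) + a for all a ∈ A. Let u⁺, u⁻, m, φ ∈ A satisfy φ = C₊(φu⁻ + m u⁻) + C₋(φu⁺ + m u⁺), and suppose 1 − u⁻ is invertible in A. Define m₊ := m + C₊((φ + m)(u⁺ + u⁻)) and m₋ := m + C₋((φ + m)(u⁺ + u⁻)). Then m₊ = m₋ · (1 − u⁻)⁻¹ (1 + u⁺). -/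
/-! The Plemelj relation turns the singular integral equation into `m₋ = (φ + m)(1 - u⁻)` and
`m₊ = (φ + m)(1 + u⁺)`; the jump relation results from eliminating the common factor `φ + m`. -/

section AddCommGroup

variable {M : Type*} [AddCommGroup M] {Cp : M → M} {Cm : M →+ M} {φ x y : M}

theorem cauchyMinus_add_of_sie (hPlemelj : ∀ a, Cp a = Cm a + a) (hφ : φ = Cp x + Cm y) :
    Cm (x + y) = φ - x := by
  rw [hφ, hPlemelj, map_add]
  abel

end AddCommGroup

section RightModule

open scoped RightActions

-- The unknown takes values in a right module so as to include row-vector-valued problems.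
variable {A M : Type*} [Ring A] [AddCommGroup M] [Module Aᵐᵒᵖ M]
  {Cp : M → M} {Cm : M →+ M} {up um : A} {m φ : M}

theorem boundaryMinus_eq_of_sie (hPlemelj : ∀ a, Cp a = Cm a + a)
    (hφ : φ = Cp (φ <• um + m <• um) + Cm (φ <• up + m <• up)) :
    m + Cm ((φ + m) <• (up + um)) = (φ + m) <• (1 - um) := by
  simp only [← smul_add] at hφ
  calc m + Cm ((φ + m) <• (up + um))
      = m + Cm ((φ + m) <• um + (φ + m) <• up) := by
        rw [add_comm up, MulOpposite.op_add, add_smul]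
    _ = m + (φ - (φ + m) <• um) := by rw [cauchyMinus_add_of_sie hPlemelj hφ]
    _ = (φ + m) <• (1 - um) := by
        rw [MulOpposite.op_sub, sub_smul, MulOpposite.op_one, one_smul]
        abel

theorem boundaryPlus_eq_of_sie (hPlemelj : ∀ a, Cp a = Cm a + a)
    (hφ : φ = Cp (φ <• um + m <• um) + Cm (φ <• up + m <• up)) :
    m + Cp ((φ + m) <• (up + um)) = (φ + m) <• (1 + up) := by
  calc m + Cp ((φ + m) <• (up + um))
      = m + Cm ((φ + m) <• (up + um)) + (φ + m) <• (up + um) := by rw [hPlemelj, add_assoc]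
    _ = (φ + m) <• (1 - um) + (φ + m) <• (up + um) := by rw [boundaryMinus_eq_of_sie hPlemelj hφ]
    _ = (φ + m) <• (1 + up) := by
        rw [← add_smul, ← MulOpposite.op_add, sub_add_add_cancel]

theorem jump_relation_of_sie_general {w : A} (hPlemelj : ∀ a, Cp a = Cm a + a)
    (hφ : φ = Cp (φ <• um + m <• um) + Cm (φ <• up + m <• up)) (hw : (1 - um) * w = 1) :
    m + Cp ((φ + m) <• (up + um)) =
      (m + Cm ((φ + m) <• (up + um))) <• w <• (1 + up) := by
  have cancel : (φ + m) <• (1 - um) <• w = φ + m := by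
    rw [smul_smul, ← MulOpposite.op_mul, hw, MulOpposite.op_one, one_smul]
  rw [boundaryMinus_eq_of_sie hPlemelj hφ, cancel, boundaryPlus_eq_of_sie hPlemelj hφ]

end RightModule

/-- Jump relation: if `C₊, C₋` are additive maps on a unital ring with `C₊ = C₋ + id`,
`φ` solves the singular integral equation `φ = C₊(φu⁻ + mu⁻) + C₋(φu⁺ + mu⁺)`, and `1 - u⁻`
is invertible, then the boundary values `m₊ = m + C₊((φ + m)(u⁺ + u⁻))` and
`m₋ = m + C₋((φ + m)(u⁺ + u⁻))` satisfy `m₊ = m₋ (1 - u⁻)⁻¹ (1 + u⁺)`. -/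
theorem jump_relation_of_sie {A : Type*} [Ring A] (Cp Cm : A →+ A)
    (hPlemelj : ∀ a : A, Cp a = Cm a + a)
    (up um m φ : A)
    (hφ : φ = Cp (φ * um + m * um) + Cm (φ * up + m * up))
    (hu : IsUnit (1 - um)) :
    m + Cp ((φ + m) * (up + um)) =
      (m + Cm ((φ + m) * (up + um))) * Ring.inverse (1 - um) * (1 + up) := by
  simpa only [op_smul_eq_mul] using
    jump_relation_of_sie_general hPlemelj hφ (Ring.mul_inverse_cancel _ hu)
end

section
/- Let ν be a complex measure on ℂ whose pushforward under the map s ↦ −s equals −ν, and let σ₁ denote the 2×2 matrix with entries σ₁(1,2) = σ₁(2,1) = 1 and zeros on the diagonal. Let u : ℂ → M₂(ℂ) be a bounded measurable function with u(−s) = σ₁ u(s) σ₁ for all s, let f : ℂ → ℂ^{1×2} be measurable with s ↦ f(s) integrable with respect to the total variation |ν|, and let k ∈ ℂ and d > 0 be such that |s − k| ≥ d and |s + k| ≥ d for |ν|-almost every s. Then ∫ f(−s) σ₁ u(s) (s − k)⁻¹ dν(s) = ( ∫ f(s) u(s) (s + k)⁻¹ dν(s) ) · σ₁. -/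
open MeasureTheory Matrix

/-- The first Pauli matrix `σ₁`. -/
noncomputable def pauliOne : Matrix (Fin 2) (Fin 2) ℂ := !![0, 1; 1, 0]

section CauchyOperator

variable {n : Type*} [Fintype n]

/-- The singular integral operator `(C_u f)(k) = ∫ f(s) u(s) (s - k)⁻¹ dν(s)` on row-vector valued
functions, for the complex measure `dν = w dμ`. At a `k` where the integral diverges its value is
the junk value `0`, and an atom of `μ` at `s = k` contributes `0`. -/
noncomputable def cauchyOperator (μ : Measure ℂ) (w : ℂ → ℂ) (u : ℂ → Matrix n n ℂ)
    (f : ℂ → n → ℂ) (k : ℂ) : n → ℂ :=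
  ∫ s, (w s * (s - k)⁻¹) • (f s ᵥ* u s) ∂μ

/-- The symmetry `(Hφ)(k) = φ(-k) J` on row-vector valued functions, the one shared by the
contour and the jump data; the paper's `H` is the case `J = σ₁`. -/
def reflectionOperator (J : Matrix n n ℂ) (φ : ℂ → n → ℂ) (k : ℂ) : n → ℂ :=
  φ (-k) ᵥ* J

theorem integral_vecMul_of_isUnit {α 𝕜 : Type*} [MeasurableSpace α] [DecidableEq n] [RCLike 𝕜]
    {μ : Measure α} {M : Matrix n n 𝕜} (hM : IsUnit M) (g : α → n → 𝕜) :
    ∫ a, g a ᵥ* M ∂μ = (∫ a, g a ∂μ) ᵥ* M := by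
  obtain ⟨M, rfl⟩ := hM
  exact (toLinearEquivRight'OfInv M.inv_mul M.mul_inv).toContinuousLinearEquiv.integral_comp_comm g

/-- Substituting `s ↦ -s` turns the kernel `(s - k)⁻¹` into `-(s + k)⁻¹`; the sign cancels against
the one of the odd density `w`. -/
theorem cauchy_symmetry_general [DecidableEq n] (μ : Measure ℂ) [μ.IsNegInvariant]
    {w : ℂ → ℂ} (hw : ∀ᵐ s ∂μ, w (-s) = -w s) {J : Matrix n n ℂ} (hJ : IsUnit J)
    {u : ℂ → Matrix n n ℂ} (hu : ∀ᵐ s ∂μ, J * u (-s) = u s * J) (f : ℂ → n → ℂ) :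
    cauchyOperator μ w u (reflectionOperator J f) =
      reflectionOperator J (cauchyOperator μ w u f) := by
  funext k
  have kernel_neg (s : ℂ) : (-s - k)⁻¹ = -(s - -k)⁻¹ := by
    rw [← inv_neg]
    ring
  calc ∫ s, (w s * (s - k)⁻¹) • (f (-s) ᵥ* J ᵥ* u s) ∂μ
      = ∫ s, (w (-s) * (-s - k)⁻¹) • (f (- -s) ᵥ* J ᵥ* u (-s)) ∂μ :=
        (integral_neg_eq_self _ μ).symm
    _ = ∫ s, ((w s * (s - -k)⁻¹) • (f s ᵥ* u s)) ᵥ* J ∂μ := by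
        refine integral_congr_ae ?_
        filter_upwards [hw, hu] with s hws hus
        rw [hws, kernel_neg, neg_mul_neg, neg_neg, vecMul_vecMul, hus, smul_vecMul, vecMul_vecMul]
    _ = (∫ s, (w s * (s - -k)⁻¹) • (f s ᵥ* u s) ∂μ) ᵥ* J := integral_vecMul_of_isUnit hJ _

end CauchyOperator

theorem pauliOne_mul_self : pauliOne * pauliOne = 1 := by
  simp [pauliOne, Matrix.one_fin_two]

theorem isUnit_pauliOne : IsUnit pauliOne :=
  .of_mul_eq_one _ pauliOne_mul_self

theorem pauliOne_mul_conj (A : Matrix (Fin 2) (Fin 2) ℂ) :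
    pauliOne * (pauliOne * A * pauliOne) = A * pauliOne := by
  rw [← mul_assoc, ← mul_assoc, pauliOne_mul_self, one_mul]

/-- Symmetry of the Cauchy kernel under `k ↦ -k`.  A complex measure `ν` on `ℂ` whose
pushforward under `s ↦ -s` is `-ν` is represented by its polar decomposition `dν = w d μ`,
where `μ = |ν|` is the total variation (a positive measure invariant under `s ↦ -s`) and
`w` is a density of modulus one which is odd (`w(-s) = -w(s)` a.e.).  If the jump matrix
satisfies `u(-s) = σ₁ u(s) σ₁` and `f` is a row-vector valued function integrable with
respect to `|ν|`, with `|s - k| ≥ d` and `|s + k| ≥ d` for `|ν|`-a.e. `s`, then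
`∫ f(-s) σ₁ u(s) (s - k)⁻¹ dν(s) = (∫ f(s) u(s) (s + k)⁻¹ dν(s)) σ₁`. -/
theorem cauchy_symmetry (μ : Measure ℂ) (w : ℂ → ℂ) (hw : Measurable w)
    (hμneg : Measure.map (fun s : ℂ => -s) μ = μ)
    (hwodd : ∀ᵐ s ∂μ, w (-s) = -w s)
    (hwmod : ∀ᵐ s ∂μ, ‖w s‖ = 1)
    (u : ℂ → Matrix (Fin 2) (Fin 2) ℂ) (hu : ∀ i j : Fin 2, Measurable fun s => u s i j)
    (hubdd : ∃ Cu : ℝ, ∀ (s : ℂ) (i j : Fin 2), ‖u s i j‖ ≤ Cu)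
    (husym : ∀ s : ℂ, u (-s) = pauliOne * u s * pauliOne)
    (f : ℂ → Fin 2 → ℂ) (hfmeas : Measurable f) (hfint : Integrable f μ)
    (k : ℂ) (d : ℝ) (hd : 0 < d)
    (hdist : ∀ᵐ s ∂μ, d ≤ ‖s - k‖ ∧ d ≤ ‖s + k‖) :
    (∫ s, (w s * (s - k)⁻¹) • ((f (-s)) ᵥ* (pauliOne * u s)) ∂μ) =
      (∫ s, (w s * (s + k)⁻¹) • ((f s) ᵥ* (u s)) ∂μ) ᵥ* pauliOne := by
  have : μ.IsNegInvariant := ⟨hμneg⟩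
  simpa [cauchyOperator, reflectionOperator] using congrFun (cauchy_symmetry_general μ hwodd
    isUnit_pauliOne (.of_forall fun s => by rw [husym, pauliOne_mul_conj]) f) k
end
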